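/- Let A be a commutative ring in which 2 = 0, let a₀, a₁, a₂, a₃, b₀, …, b₆ ∈ A and let α, β, γ, δ ∈ A satisfy αδ + βγ = 1. Define a₀', …, a₃' ∈ A by Σᵢ aᵢ' x₁^{3−i}x₂^i = a(αx₁ + βx₂, γx₁ + δx₂) and b₀', …, b₆' ∈ A by Σⱼ bⱼ' x₁^{6−j}x₂^j = b(αx₁ + βx₂, γx₁ + δx₂) in A[x₁,x₂], where a = Σᵢ aᵢ x₁^{3−i}x₂^i and b = Σⱼ bⱼ x₁^{6−j}x₂^j. Then K₃(a₀',…,a₃', b₀',…,b₆') = K₃(a₀,…,a₃, b₀,…,b₆): the invariant K₃ is invariant under the simultaneous SL(2)-action on the pair (a, b) in characteristic 2. -/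

import Mathlib

/-!
Modulo 2 the ring `A[x₁, x₂]` is free over `A[x₁², x₂²]` on `1, x₁, x₂, x₁x₂`, and a matrix `g`
acts on `A[x₁², x₂²]` through its entrywise square. So the sextic is
`e(x₁², x₂²) + x₁x₂ c(x₁², x₂²)` with `e` a cubic and `c` a quadratic form; under `g`, `c` is
substituted and multiplied by `D = det g`, while `e` is substituted and receives the product of the
substituted `c` with a linear form.

With `h₀ x₁² + h₁ x₁x₂ + h₂ x₂²` the Hessian of the cubic modulo 2, `K₃` regroups as
`h₁ (b₃² + Q) + c(h₂, h₀)`, where `Q` is quadratic in the cubic and linear in the sextic. Here `h₁`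
and `b₃` are invariants, and `Q` is one up to a defect depending on the forms only through `c` and
the Hessian. The defect of `Q`, multiplied by `h₁`, equals the defect of `c(h₂, h₀)`, so in
characteristic 2 the two cancel and `K₃` is multiplied by `D ^ 9`.
-/

open MvPolynomial

/-- The invariant `K₃` of a pair `(a, b)` of a binary cubic and a binary sextic. -/
def K₃ {A : Type*} [CommRing A] (a₀ a₁ a₂ a₃ b₀ b₁ b₂ b₃ b₄ b₅ b₆ : A) : A :=
  (a₀ * a₃ + a₁ * a₂) * b₃ ^ 2
    + (a₀ ^ 2 * a₃ ^ 2 + a₀ * a₂ ^ 3 + a₁ ^ 3 * a₃ + a₁ ^ 2 * a₂ ^ 2) * b₃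
    + (a₀ * a₃ + a₁ * a₂) * a₁ ^ 2 * b₄
    + (a₀ * a₃ + a₁ * a₂) * a₂ ^ 2 * b₂
    + (a₀ ^ 2 * a₁ * a₃ + a₀ ^ 2 * a₂ ^ 2 + a₀ * a₁ ^ 2 * a₂ + a₁ ^ 4) * b₅
    + (a₀ * a₂ * a₃ ^ 2 + a₁ ^ 2 * a₃ ^ 2 + a₁ * a₂ ^ 2 * a₃ + a₂ ^ 4) * b₁
    + (a₀ * a₃ + a₁ * a₂) * a₀ ^ 2 * b₆
    + (a₀ * a₃ + a₁ * a₂) * a₃ ^ 2 * b₀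

section Interleave

variable {A : Type*}

/-- The coefficients of the sextic `e(x₁², x₂²) + x₁x₂ c(x₁², x₂²)`. -/
def interleave (e : Fin 4 → A) (c : Fin 3 → A) : Fin 7 → A :=
  ![e 0, c 0, e 1, c 1, e 2, c 2, e 3]

/-- The cubic form `e` in the decomposition `e(x₁², x₂²) + x₁x₂ c(x₁², x₂²)` of a sextic. -/
def evenCoeffs (b : Fin 7 → A) : Fin 4 → A := ![b 0, b 2, b 4, b 6]

/-- The quadratic form `c` in the decomposition `e(x₁², x₂²) + x₁x₂ c(x₁², x₂²)` of a sextic. -/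
def oddCoeffs (b : Fin 7 → A) : Fin 3 → A := ![b 1, b 3, b 5]

theorem interleave_evenCoeffs_oddCoeffs (b : Fin 7 → A) :
    interleave (evenCoeffs b) (oddCoeffs b) = b := by
  ext i
  fin_cases i <;> rfl

theorem evenCoeffs_interleave (e : Fin 4 → A) (c : Fin 3 → A) :
    evenCoeffs (interleave e c) = e := by
  ext i
  fin_cases i <;> rfl

theorem oddCoeffs_interleave (e : Fin 4 → A) (c : Fin 3 → A) :
    oddCoeffs (interleave e c) = c := by
  ext i
  fin_cases i <;> rfl

end Interleave

section BinaryForms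

variable {A : Type*} [CommSemiring A]

/-- The binary form `∑ cᵢ x₁ⁿ⁻ⁱ x₂ⁱ` with coefficient vector `c`, where `x₁ = X 0`, `x₂ = X 1`. -/
noncomputable def binaryForm {n : ℕ} (c : Fin (n + 1) → A) : MvPolynomial (Fin 2) A :=
  ∑ i : Fin (n + 1), C (c i) * X 0 ^ (n - i : ℕ) * X 1 ^ (i : ℕ)

theorem binaryForm_linear (c : Fin 2 → A) : binaryForm c = C (c 0) * X 0 + C (c 1) * X 1 := by
  simp [binaryForm]

theorem binaryForm_quadratic (c : Fin 3 → A) :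
    binaryForm c = C (c 0) * X 0 ^ 2 + C (c 1) * X 0 * X 1 + C (c 2) * X 1 ^ 2 := by
  simp [binaryForm, Fin.sum_univ_succ, ← add_assoc]

theorem binaryForm_cubic (c : Fin 4 → A) :
    binaryForm c = C (c 0) * X 0 ^ 3 + C (c 1) * X 0 ^ 2 * X 1 + C (c 2) * X 0 * X 1 ^ 2 +
      C (c 3) * X 1 ^ 3 := by
  simp [binaryForm, Fin.sum_univ_succ, ← add_assoc]

theorem binaryForm_sextic (c : Fin 7 → A) :
    binaryForm c = C (c 0) * X 0 ^ 6 + C (c 1) * X 0 ^ 5 * X 1 + C (c 2) * X 0 ^ 4 * X 1 ^ 2 +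
      C (c 3) * X 0 ^ 3 * X 1 ^ 3 + C (c 4) * X 0 ^ 2 * X 1 ^ 4 + C (c 5) * X 0 * X 1 ^ 5 +
      C (c 6) * X 1 ^ 6 := by
  simp [binaryForm, Fin.sum_univ_succ, ← add_assoc]

theorem binaryForm_injective (n : ℕ) :
    Function.Injective (binaryForm : (Fin (n + 1) → A) → MvPolynomial (Fin 2) A) := by
  intro c d h
  funext j
  have h_dehomogenized :=
    congrArg (fun p ↦ (aeval ![(1 : Polynomial A), Polynomial.X] p).coeff j) h
  simpa [binaryForm, Polynomial.finsetSum_coeff, Polynomial.coeff_X_pow, Fin.val_inj]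
    using h_dehomogenized

theorem binaryForm_add {n : ℕ} (c d : Fin (n + 1) → A) :
    binaryForm (c + d) = binaryForm c + binaryForm d := by
  simp [binaryForm, add_mul, Finset.sum_add_distrib]

theorem binaryForm_smul {n : ℕ} (r : A) (c : Fin (n + 1) → A) :
    binaryForm (r • c) = C r * binaryForm c := by
  simp [binaryForm, mul_assoc, Finset.mul_sum]

theorem toMvPolynomial_eq_binaryForm {m : Type*} (g : Matrix m (Fin 2) A) (i : m) :
    g.toMvPolynomial i = binaryForm (g i) := by
  simp [Matrix.toMvPolynomial, binaryForm, C_mul_X_eq_monomial]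

/-- The coefficients of the product of the linear form `l` and the quadratic form `c`. -/
def mulLinear (l : Fin 2 → A) (c : Fin 3 → A) : Fin 4 → A :=
  ![l 0 * c 0, l 0 * c 1 + l 1 * c 0, l 0 * c 2 + l 1 * c 1, l 1 * c 2]

theorem binaryForm_mulLinear (l : Fin 2 → A) (c : Fin 3 → A) :
    binaryForm (mulLinear l c) = binaryForm l * binaryForm c := by
  simp only [binaryForm_linear, binaryForm_quadratic, binaryForm_cubic, mulLinear,
    Matrix.cons_val, C_add, C_mul]
  ring

theorem binaryForm_interleave (e : Fin 4 → A) (c : Fin 3 → A) :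
    binaryForm (interleave e c) =
      expand 2 (binaryForm e) + X 0 * X 1 * expand 2 (binaryForm c) := by
  simp only [binaryForm_quadratic, binaryForm_cubic, binaryForm_sextic, interleave,
    Matrix.cons_val, map_add, map_mul, map_pow, expand_C, expand_X]
  ring

end BinaryForms

section Substitution

variable {A : Type*} [CommRing A]

/-- The coefficients, reduced modulo 2, of the quadratic form `c` after the substitution `g`. -/
def quadraticSubst (g : Matrix (Fin 2) (Fin 2) A) (c : Fin 3 → A) : Fin 3 → A :=
  ![g 0 0 ^ 2 * c 0 + g 0 0 * g 1 0 * c 1 + g 1 0 ^ 2 * c 2,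
    g.det * c 1,
    g 0 1 ^ 2 * c 0 + g 0 1 * g 1 1 * c 1 + g 1 1 ^ 2 * c 2]

/-- The coefficients, reduced modulo 2, of the cubic form `a` after the substitution `g`. The
factors in parentheses come from writing `a` as `x₁ p(x₁², x₂²) + x₂ q(x₁², x₂²)`. -/
def cubicSubst (g : Matrix (Fin 2) (Fin 2) A) (a : Fin 4 → A) : Fin 4 → A :=
  ![g 0 0 * (g 0 0 ^ 2 * a 0 + g 1 0 ^ 2 * a 2) + g 1 0 * (g 0 0 ^ 2 * a 1 + g 1 0 ^ 2 * a 3),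
    g 0 1 * (g 0 0 ^ 2 * a 0 + g 1 0 ^ 2 * a 2) + g 1 1 * (g 0 0 ^ 2 * a 1 + g 1 0 ^ 2 * a 3),
    g 0 0 * (g 0 1 ^ 2 * a 0 + g 1 1 ^ 2 * a 2) + g 1 0 * (g 0 1 ^ 2 * a 1 + g 1 1 ^ 2 * a 3),
    g 0 1 * (g 0 1 ^ 2 * a 0 + g 1 1 ^ 2 * a 2) + g 1 1 * (g 0 1 ^ 2 * a 1 + g 1 1 ^ 2 * a 3)]

/-- The coefficients, reduced modulo 2, of the sextic form `b` after the substitution `g`. The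
product `g 0 * g 1` of the rows is entrywise: it holds the coefficients of `x₁²` and `x₂²` in the
image of `x₁x₂`. -/
def sexticSubst (g : Matrix (Fin 2) (Fin 2) A) (b : Fin 7 → A) : Fin 7 → A :=
  interleave
    (cubicSubst (g.map (· ^ 2)) (evenCoeffs b) +
      mulLinear (g 0 * g 1) (quadraticSubst (g.map (· ^ 2)) (oddCoeffs b)))
    (g.det • quadraticSubst (g.map (· ^ 2)) (oddCoeffs b))

variable [CharP A 2] (g : Matrix (Fin 2) (Fin 2) A)

theorem bind₁_binaryForm_quadratic (c : Fin 3 → A) :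
    bind₁ g.toMvPolynomial (binaryForm c) = binaryForm (quadraticSubst g c) := by
  simp only [binaryForm_linear, binaryForm_quadratic, quadraticSubst, Matrix.cons_val,
    Matrix.det_fin_two, map_add, map_sub, map_mul, map_pow, bind₁_C_right, bind₁_X_right,
    toMvPolynomial_eq_binaryForm]
  grind

theorem bind₁_binaryForm_cubic (a : Fin 4 → A) :
    bind₁ g.toMvPolynomial (binaryForm a) = binaryForm (cubicSubst g a) := by
  simp only [binaryForm_linear, binaryForm_cubic, cubicSubst, Matrix.cons_val, map_add, map_mul,
    map_pow, bind₁_C_right, bind₁_X_right, toMvPolynomial_eq_binaryForm]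
  grind

theorem bind₁_expand_two (f : MvPolynomial (Fin 2) A) :
    bind₁ g.toMvPolynomial (expand 2 f) = expand 2 (bind₁ (g.map (· ^ 2)).toMvPolynomial f) := by
  have h_algHom : (bind₁ g.toMvPolynomial).comp (expand 2) =
      (expand 2).comp (bind₁ (g.map (· ^ 2)).toMvPolynomial) := by
    ext1 i
    simp [toMvPolynomial_eq_binaryForm, binaryForm_linear, CharTwo.add_sq, mul_pow]
  exact DFunLike.congr_fun h_algHom f

theorem binaryForm_row_mul_row :
    binaryForm (g 0) * binaryForm (g 1) =
      expand 2 (binaryForm (g 0 * g 1)) + C g.det * (X 0 * X 1) := by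
  simp only [binaryForm_linear, Matrix.det_fin_two, CharTwo.sub_eq_add, Pi.mul_apply, map_add,
    map_mul, expand_C, expand_X]
  ring

theorem bind₁_binaryForm_sextic (b : Fin 7 → A) :
    bind₁ g.toMvPolynomial (binaryForm b) = binaryForm (sexticSubst g b) := by
  conv_lhs => rw [← interleave_evenCoeffs_oddCoeffs b]
  simp only [sexticSubst, binaryForm_interleave, binaryForm_add, binaryForm_mulLinear,
    binaryForm_smul, map_add, map_mul, expand_C, bind₁_expand_two, bind₁_binaryForm_cubic,
    bind₁_binaryForm_quadratic, bind₁_X_right, toMvPolynomial_eq_binaryForm,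
    binaryForm_row_mul_row]
  ring

theorem cubicSubst_sq (a : Fin 4 → A) :
    cubicSubst g a ^ 2 = cubicSubst (g.map (· ^ 2)) (a ^ 2) := by
  ext i
  fin_cases i <;> simp [cubicSubst, CharTwo.add_sq, mul_pow]

theorem det_map_sq : (g.map (· ^ 2)).det = g.det ^ 2 := by
  simp [Matrix.det_fin_two, CharTwo.sub_eq_add, CharTwo.add_sq, mul_pow]

end Substitution

section Covariants

variable {A : Type*} [CommRing A]

/-- The value of the quadratic form `c` at `(s, t)`. -/
def evalQuadratic (c : Fin 3 → A) (s t : A) : A := c 0 * s ^ 2 + c 1 * (s * t) + c 2 * t ^ 2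

/-- The coefficients of the Hessian of the cubic form `a`, divided by 4 and reduced modulo 2. -/
def hessian (a : Fin 4 → A) : Fin 3 → A :=
  ![a 0 * a 2 + a 1 ^ 2, a 0 * a 3 + a 1 * a 2, a 1 * a 3 + a 2 ^ 2]

/-- The invariant pairing of two cubic forms, reduced modulo 2. -/
def cubicPairing (u v : Fin 4 → A) : A := u 0 * v 3 + u 1 * v 2 + u 2 * v 1 + u 3 * v 0

/-- The bilinear form `p₀q₀c₂ + p₀q₁c₁ + p₁q₁c₀` with associated quadratic form `c(p₁, p₀)`,
evaluated at the linear forms `p`, `q` for which `a = x₁ p(x₁², x₂²) + x₂ q(x₁², x₂²)`. -/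
def crossTerm (a : Fin 4 → A) (c : Fin 3 → A) : A :=
  a 0 * a 1 * c 2 + a 0 * a 3 * c 1 + a 2 * a 3 * c 0

/-- The expression `Q`, quadratic in the cubic `a` and linear in the sextic `b`, for which
`K₃ = h₁ (b₃² + Q) + c(h₂, h₀)` with `h = hessian a` and `c = oddCoeffs b`. -/
def contraction (a : Fin 4 → A) (b : Fin 7 → A) : A :=
  cubicPairing (a ^ 2) (evenCoeffs b) + crossTerm a (oddCoeffs b)

/-- `K₃` as a function of the coefficient vectors of the cubic and the sextic. -/
def pairInvariant (a : Fin 4 → A) (b : Fin 7 → A) : A :=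
  K₃ (a 0) (a 1) (a 2) (a 3) (b 0) (b 1) (b 2) (b 3) (b 4) (b 5) (b 6)

theorem evalQuadratic_smul (r : A) (c : Fin 3 → A) (s t : A) :
    evalQuadratic (r • c) s t = r * evalQuadratic c s t := by
  simp only [evalQuadratic, Pi.smul_apply, smul_eq_mul]
  ring

theorem evalQuadratic_mul_mul (c : Fin 3 → A) (r s t : A) :
    evalQuadratic c (r * s) (r * t) = r ^ 2 * evalQuadratic c s t := by
  simp only [evalQuadratic]
  ring

theorem cubicPairing_add_right (u v w : Fin 4 → A) :
    cubicPairing u (v + w) = cubicPairing u v + cubicPairing u w := by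
  simp only [cubicPairing, Pi.add_apply]
  ring

variable [CharP A 2]

theorem evalQuadratic_add (c : Fin 3 → A) (s t s' t' : A) :
    evalQuadratic c (s + s') (t + t') =
      evalQuadratic c s t + evalQuadratic c s' t' + c 1 * (s * t' + s' * t) := by
  simp only [evalQuadratic, CharTwo.add_sq]
  ring

theorem pairInvariant_eq (a : Fin 4 → A) (b : Fin 7 → A) :
    pairInvariant a b = hessian a 1 * (b 3 ^ 2 + contraction a b) +
      evalQuadratic (oddCoeffs b) (hessian a 2) (hessian a 0) := by
  simp only [pairInvariant, K₃, hessian, contraction, cubicPairing, crossTerm, evalQuadratic,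
    evenCoeffs, oddCoeffs, Matrix.cons_val, Pi.pow_apply]
  grind

variable (g : Matrix (Fin 2) (Fin 2) A)

theorem evalQuadratic_quadraticSubst (c : Fin 3 → A) (s t : A) :
    evalQuadratic (quadraticSubst g c) s t =
      evalQuadratic c (g 0 0 * s + g 0 1 * t) (g 1 0 * s + g 1 1 * t) := by
  simp only [evalQuadratic, quadraticSubst, Matrix.cons_val, Matrix.det_fin_two]
  grind

theorem hessian_cubicSubst (a : Fin 4 → A) :
    hessian (cubicSubst g a) = g.det ^ 2 • quadraticSubst g (hessian a) := by
  ext i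
  fin_cases i <;>
    simp only [hessian, cubicSubst, quadraticSubst, Matrix.det_fin_two, Matrix.cons_val,
      Pi.smul_apply, smul_eq_mul, Fin.zero_eta, Fin.mk_one, Fin.reduceFinMk] <;>
    grind

theorem hessian_one_cubicSubst (a : Fin 4 → A) :
    hessian (cubicSubst g a) 1 = g.det ^ 3 * hessian a 1 := by
  simp only [hessian_cubicSubst, quadraticSubst, Matrix.cons_val, Pi.smul_apply, smul_eq_mul]
  ring

theorem sexticSubst_three (b : Fin 7 → A) : sexticSubst g b 3 = g.det ^ 3 * b 3 := by
  simp only [sexticSubst, interleave, quadraticSubst, det_map_sq, oddCoeffs, Matrix.cons_val,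
    Pi.smul_apply, smul_eq_mul]
  ring

theorem cubicPairing_cubicSubst (u v : Fin 4 → A) :
    cubicPairing (cubicSubst g u) (cubicSubst g v) = g.det ^ 3 * cubicPairing u v := by
  simp only [cubicPairing, cubicSubst, Matrix.cons_val, Matrix.det_fin_two]
  grind

theorem cubicPairing_mulLinear_add_crossTerm (a : Fin 4 → A) (c : Fin 3 → A) :
    cubicPairing (cubicSubst g a ^ 2)
        (mulLinear (g 0 * g 1) (quadraticSubst (g.map (· ^ 2)) c)) +
      crossTerm (cubicSubst g a) (g.det • quadraticSubst (g.map (· ^ 2)) c) =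
    g.det ^ 6 * crossTerm a c + g.det ^ 4 *
      (hessian a 1 * evalQuadratic c (g 0 0 * g 0 1) (g 1 0 * g 1 1) +
        g.det * c 1 * (g 0 0 * g 0 1 * hessian a 0 + g 1 0 * g 1 1 * hessian a 2)) := by
  simp only [cubicPairing, crossTerm, cubicSubst, mulLinear, quadraticSubst, hessian,
    evalQuadratic, Matrix.det_fin_two, Matrix.cons_val, Matrix.map_apply, Pi.pow_apply,
    Pi.mul_apply, Pi.smul_apply, smul_eq_mul]
  grind

theorem contraction_subst (a : Fin 4 → A) (b : Fin 7 → A) :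
    contraction (cubicSubst g a) (sexticSubst g b) =
      g.det ^ 6 * contraction a b + g.det ^ 4 *
        (hessian a 1 * evalQuadratic (oddCoeffs b) (g 0 0 * g 0 1) (g 1 0 * g 1 1) +
          g.det * oddCoeffs b 1 *
            (g 0 0 * g 0 1 * hessian a 0 + g 1 0 * g 1 1 * hessian a 2)) := by
  have h_even : cubicPairing (cubicSubst g a ^ 2) (cubicSubst (g.map (· ^ 2)) (evenCoeffs b)) =
      g.det ^ 6 * cubicPairing (a ^ 2) (evenCoeffs b) := by
    rw [cubicSubst_sq, cubicPairing_cubicSubst, det_map_sq, ← pow_mul]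
  rw [contraction, contraction, sexticSubst, evenCoeffs_interleave, oddCoeffs_interleave,
    cubicPairing_add_right, h_even, add_assoc, cubicPairing_mulLinear_add_crossTerm]
  ring

theorem evalQuadratic_hessian_subst (a : Fin 4 → A) (b : Fin 7 → A) :
    evalQuadratic (oddCoeffs (sexticSubst g b))
        (hessian (cubicSubst g a) 2) (hessian (cubicSubst g a) 0) =
      g.det ^ 7 * evalQuadratic (oddCoeffs b)
        (g.det * hessian a 2 + hessian a 1 * (g 0 0 * g 0 1))
        (g.det * hessian a 0 + hessian a 1 * (g 1 0 * g 1 1)) := by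
  have h_fst : g 0 0 ^ 2 * hessian (cubicSubst g a) 2 + g 0 1 ^ 2 * hessian (cubicSubst g a) 0 =
      g.det ^ 3 * (g.det * hessian a 2 + hessian a 1 * (g 0 0 * g 0 1)) := by
    simp only [hessian_cubicSubst, quadraticSubst, Matrix.det_fin_two, Matrix.cons_val,
      Pi.smul_apply, smul_eq_mul]
    grind
  have h_snd : g 1 0 ^ 2 * hessian (cubicSubst g a) 2 + g 1 1 ^ 2 * hessian (cubicSubst g a) 0 =
      g.det ^ 3 * (g.det * hessian a 0 + hessian a 1 * (g 1 0 * g 1 1)) := by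
    simp only [hessian_cubicSubst, quadraticSubst, Matrix.det_fin_two, Matrix.cons_val,
      Pi.smul_apply, smul_eq_mul]
    grind
  simp only [sexticSubst, oddCoeffs_interleave, evalQuadratic_smul, evalQuadratic_quadraticSubst,
    Matrix.map_apply, h_fst, h_snd, evalQuadratic_mul_mul]
  ring

theorem pairInvariant_subst (a : Fin 4 → A) (b : Fin 7 → A) :
    pairInvariant (cubicSubst g a) (sexticSubst g b) = g.det ^ 9 * pairInvariant a b := by
  rw [pairInvariant_eq, pairInvariant_eq, hessian_one_cubicSubst, sexticSubst_three,
    contraction_subst, evalQuadratic_hessian_subst, evalQuadratic_add, evalQuadratic_mul_mul,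
    evalQuadratic_mul_mul]
  -- The defect of `h₁ Q` and that of `c(h₂, h₀)` are the same term.
  linear_combination
    (g.det ^ 7 * hessian a 1 ^ 2 *
        evalQuadratic (oddCoeffs b) (g 0 0 * g 0 1) (g 1 0 * g 1 1) +
      g.det ^ 8 * hessian a 1 * oddCoeffs b 1 *
        (g 0 0 * g 0 1 * hessian a 0 + g 1 0 * g 1 1 * hessian a 2)) *
    CharTwo.two_eq_zero (R := A)

end Covariants

theorem K3_SL2_invariant_general (A : Type*) [CommRing A] (h2 : (2 : A) = 0)
    (a₀ a₁ a₂ a₃ b₀ b₁ b₂ b₃ b₄ b₅ b₆ α β γ δ : A)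
    (a₀' a₁' a₂' a₃' b₀' b₁' b₂' b₃' b₄' b₅' b₆' : A)
    (ha :
      (C a₀' * X 0 ^ 3 + C a₁' * X 0 ^ 2 * X 1 + C a₂' * X 0 * X 1 ^ 2 + C a₃' * X 1 ^ 3
        : MvPolynomial (Fin 2) A) =
      bind₁ ![C α * X 0 + C β * X 1, C γ * X 0 + C δ * X 1]
        (C a₀ * X 0 ^ 3 + C a₁ * X 0 ^ 2 * X 1 + C a₂ * X 0 * X 1 ^ 2 + C a₃ * X 1 ^ 3))
    (hb :
      (C b₀' * X 0 ^ 6 + C b₁' * X 0 ^ 5 * X 1 + C b₂' * X 0 ^ 4 * X 1 ^ 2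
        + C b₃' * X 0 ^ 3 * X 1 ^ 3 + C b₄' * X 0 ^ 2 * X 1 ^ 4 + C b₅' * X 0 * X 1 ^ 5
        + C b₆' * X 1 ^ 6 : MvPolynomial (Fin 2) A) =
      bind₁ ![C α * X 0 + C β * X 1, C γ * X 0 + C δ * X 1]
        (C b₀ * X 0 ^ 6 + C b₁ * X 0 ^ 5 * X 1 + C b₂ * X 0 ^ 4 * X 1 ^ 2
          + C b₃ * X 0 ^ 3 * X 1 ^ 3 + C b₄ * X 0 ^ 2 * X 1 ^ 4 + C b₅ * X 0 * X 1 ^ 5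
          + C b₆ * X 1 ^ 6)) :
    K₃ a₀' a₁' a₂' a₃' b₀' b₁' b₂' b₃' b₄' b₅' b₆' =
      (α * δ + β * γ) ^ 9 * K₃ a₀ a₁ a₂ a₃ b₀ b₁ b₂ b₃ b₄ b₅ b₆ := by
  -- `CharP A 2` excludes the zero ring, where `2 = 0` holds as well.
  rcases subsingleton_or_nontrivial A with _ | _
  · exact Subsingleton.elim _ _
  have : CharP A 2 := CharTwo.of_one_ne_zero_of_two_eq_zero one_ne_zero h2
  let g : Matrix (Fin 2) (Fin 2) A := !![α, β; γ, δ]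
  have hg : g.toMvPolynomial = ![C α * X 0 + C β * X 1, C γ * X 0 + C δ * X 1] := by
    ext1 i
    fin_cases i <;> simp [g, toMvPolynomial_eq_binaryForm, binaryForm_linear]
  have ha_subst : ![a₀', a₁', a₂', a₃'] = cubicSubst g ![a₀, a₁, a₂, a₃] := by
    apply binaryForm_injective
    rw [← bind₁_binaryForm_cubic, hg]
    simpa only [binaryForm_cubic, Matrix.cons_val] using ha
  have hb_subst : ![b₀', b₁', b₂', b₃', b₄', b₅', b₆'] =
      sexticSubst g ![b₀, b₁, b₂, b₃, b₄, b₅, b₆] := by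
    apply binaryForm_injective
    rw [← bind₁_binaryForm_sextic, hg]
    simpa only [binaryForm_sextic, Matrix.cons_val] using hb
  have h := pairInvariant_subst g ![a₀, a₁, a₂, a₃] ![b₀, b₁, b₂, b₃, b₄, b₅, b₆]
  rw [← ha_subst, ← hb_subst, Matrix.det_fin_two, CharTwo.sub_eq_add] at h
  exact h

/-- In characteristic 2, the invariant `K₃` is invariant under the simultaneous
SL(2)-action `x₁ ↦ αx₁ + βx₂`, `x₂ ↦ γx₁ + δx₂` (with `αδ + βγ = 1`) on the pair
`(a, b)` of a binary cubic and a binary sextic. -/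
theorem K3_SL2_invariant (A : Type*) [CommRing A] (h2 : (2 : A) = 0)
    (a₀ a₁ a₂ a₃ b₀ b₁ b₂ b₃ b₄ b₅ b₆ α β γ δ : A)
    (a₀' a₁' a₂' a₃' b₀' b₁' b₂' b₃' b₄' b₅' b₆' : A)
    (hdet : α * δ + β * γ = 1)
    (ha :
      (C a₀' * X 0 ^ 3 + C a₁' * X 0 ^ 2 * X 1 + C a₂' * X 0 * X 1 ^ 2 + C a₃' * X 1 ^ 3
        : MvPolynomial (Fin 2) A) =
      bind₁ ![C α * X 0 + C β * X 1, C γ * X 0 + C δ * X 1]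
        (C a₀ * X 0 ^ 3 + C a₁ * X 0 ^ 2 * X 1 + C a₂ * X 0 * X 1 ^ 2 + C a₃ * X 1 ^ 3))
    (hb :
      (C b₀' * X 0 ^ 6 + C b₁' * X 0 ^ 5 * X 1 + C b₂' * X 0 ^ 4 * X 1 ^ 2
        + C b₃' * X 0 ^ 3 * X 1 ^ 3 + C b₄' * X 0 ^ 2 * X 1 ^ 4 + C b₅' * X 0 * X 1 ^ 5
        + C b₆' * X 1 ^ 6 : MvPolynomial (Fin 2) A) =
      bind₁ ![C α * X 0 + C β * X 1, C γ * X 0 + C δ * X 1]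
        (C b₀ * X 0 ^ 6 + C b₁ * X 0 ^ 5 * X 1 + C b₂ * X 0 ^ 4 * X 1 ^ 2
          + C b₃ * X 0 ^ 3 * X 1 ^ 3 + C b₄ * X 0 ^ 2 * X 1 ^ 4 + C b₅ * X 0 * X 1 ^ 5
          + C b₆ * X 1 ^ 6)) :
    K₃ a₀' a₁' a₂' a₃' b₀' b₁' b₂' b₃' b₄' b₅' b₆' =
      K₃ a₀ a₁ a₂ a₃ b₀ b₁ b₂ b₃ b₄ b₅ b₆ := by
  rw [K3_SL2_invariant_general A h2 a₀ a₁ a₂ a₃ b₀ b₁ b₂ b₃ b₄ b₅ b₆ α β γ δ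
    a₀' a₁' a₂' a₃' b₀' b₁' b₂' b₃' b₄' b₅' b₆' ha hb, hdet, one_pow, one_mul]
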